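/- For every integer k ≥ 3, one has L_{2k} ≥ 2 · L_k, where the inequality and product are taken in the extended nonnegative reals [0, +∞]. -/

import Mathlib

open Filter Topology
open scoped ENNReal

/-- `N` has the Ramsey property for the tuple `k`: every `r`-coloring of the
edges of the complete graph on `N` vertices admits a color `i` and a set of
`k i` vertices all of whose connecting edges have color `i`. -/
def ramseyProp {r : ℕ} (k : Fin r → ℕ) (N : ℕ) : Prop :=
  ∀ c : Sym2 (Fin N) → Fin r, ∃ i : Fin r, ∃ S : Finset (Fin N),
    S.card = k i ∧ ∀ u ∈ S, ∀ v ∈ S, u ≠ v → c s(u, v) = i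

/-- The multicolor Ramsey number `R(k 0, …, k (r-1))`: the least positive `N`
with the Ramsey property. -/
noncomputable def multiRamsey {r : ℕ} (k : Fin r → ℕ) : ℕ :=
  sInf {N | 0 < N ∧ ramseyProp k N}

/-- The diagonal multicolor Ramsey number `R_r(k)`. -/
noncomputable def diagRamsey (r k : ℕ) : ℕ :=
  multiRamsey (fun _ : Fin r => k)

/-- DC, the "decreasing conjecture". -/
def DC : Prop :=
  ∀ (r : ℕ), 2 ≤ r → ∀ k : Fin r → ℕ, (∀ l, 2 ≤ k l) →
    ∀ i j : Fin r, i ≠ j → 3 ≤ k i → k i ≤ k j →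
      multiRamsey (fun l => if l = i then k i - 1 else if l = j then k j + 1 else k l)
        ≤ multiRamsey k

/-!
An edge coloring `χ` avoiding monochromatic cliques of sizes `k i` and an edge coloring `ψ` avoiding
those of sizes `l i` have a lexicographic product: edges joining different fibers are colored by
`χ`, edges inside a fiber by `ψ`. A monochromatic clique meets at most `k i - 1` fibers, in at most
`l i - 1` vertices each, so the product avoids cliques of size `(k i - 1) * (l i - 1) + 1`. For `χ`
we take the cube `{1, …, m} ^ r`, every edge being colored by some coordinate in which its endpoints
differ: a clique in color `i` is separated by the `i`-th coordinate, hence has at most `m` vertices.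
This yields `m ^ r * (R_r(k) - 1) < R_r(n)` whenever `m * (k - 1) < n`, and taking `r`-th roots
gives `m * L_k ≤ L_n` for `k ≥ 2`.
-/

section Coloring

open Finset

variable {V W K : Type*}

/-- The graph formed by the edges of color `i` in the edge coloring `c` of the complete graph on
`V`. `Sym2 V` also contains the diagonal, whose colors are ignored. -/
def colorGraph (c : Sym2 V → K) (i : K) : SimpleGraph V :=
  .fromEdgeSet (c ⁻¹' {i})

theorem colorGraph_adj {c : Sym2 V → K} {i : K} {u v : V} :
    (colorGraph c i).Adj u v ↔ c s(u, v) = i ∧ u ≠ v :=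
  Iff.rfl

theorem colorGraph_comp_map (c : Sym2 V → K) (f : W ↪ V) (i : K) :
    colorGraph (c ∘ Sym2.map f) i = (colorGraph c i).comap f := by
  ext u v
  simp [colorGraph_adj]

/-- The edge coloring `c` of the complete graph on `V` has, for each color `i`, no clique of size
`k i` in color `i`. These are the colorings which bound the Ramsey number of `k` from below. -/
def AvoidsCliques (c : Sym2 V → K) (k : K → ℕ) : Prop :=
  ∀ i, (colorGraph c i).CliqueFree (k i)

theorem AvoidsCliques.comp_map {c : Sym2 V → K} {k : K → ℕ} (hc : AvoidsCliques c k) (f : W ↪ V) :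
    AvoidsCliques (c ∘ Sym2.map f) k := fun i => by
  rw [colorGraph_comp_map]
  exact (hc i).comap (SimpleGraph.Embedding.comap f _).isContained

theorem card_lt_of_isClique_of_cliqueFree {G : SimpleGraph V} {n : ℕ} {s : Finset V}
    (hG : G.CliqueFree n) (hs : G.IsClique s) : #s < n := by
  by_contra! hn
  exact hG.mono hn s ⟨hs, rfl⟩

open Classical in
/-- The lexicographic product of two edge colorings: an edge between different fibers of
`Prod.fst` takes its color from `χ`, an edge inside a fiber from `ψ`. -/
noncomputable def lexColoring (χ : Sym2 V → K) (ψ : Sym2 W → K) (e : Sym2 (V × W)) : K :=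
  if (e.map Prod.fst).IsDiag then ψ (e.map Prod.snd) else χ (e.map Prod.fst)

theorem colorGraph_lexColoring_adj {χ : Sym2 V → K} {ψ : Sym2 W → K} {i : K} {u v : V × W} :
    (colorGraph (lexColoring χ ψ) i).Adj u v ↔
      (colorGraph χ i).Adj u.1 v.1 ∨ u.1 = v.1 ∧ (colorGraph ψ i).Adj u.2 v.2 := by
  by_cases h : u.1 = v.1 <;> simp [colorGraph_adj, lexColoring, Prod.ext_iff, h]

theorem AvoidsCliques.lexColoring {χ : Sym2 V → K} {ψ : Sym2 W → K} {k l n : K → ℕ}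
    (hχ : AvoidsCliques χ k) (hψ : AvoidsCliques ψ l) (hn : ∀ i, (k i - 1) * (l i - 1) < n i) :
    AvoidsCliques (lexColoring χ ψ) n := by
  classical
  rintro i s ⟨hs, hcard⟩
  have hfst : #(s.image Prod.fst) ≤ k i - 1 := by
    refine Nat.le_sub_one_of_lt (card_lt_of_isClique_of_cliqueFree (hχ i) ?_)
    rw [coe_image]
    rintro _ ⟨u, hu, rfl⟩ _ ⟨v, hv, rfl⟩ huv
    have hadj := colorGraph_lexColoring_adj.mp (hs hu hv (ne_of_apply_ne _ huv))
    exact hadj.resolve_right fun h => huv h.1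
  have hfiber (a : V) : #{u ∈ s | u.1 = a} ≤ l i - 1 := by
    have hinj : (({u ∈ s | u.1 = a} : Finset (V × W)) : Set (V × W)).InjOn Prod.snd := by
      simp +contextual [Set.InjOn, Prod.ext_iff]
    rw [← card_image_of_injOn hinj]
    refine Nat.le_sub_one_of_lt (card_lt_of_isClique_of_cliqueFree (hψ i) ?_)
    rw [coe_image]
    rintro _ ⟨u, hu, rfl⟩ _ ⟨v, hv, rfl⟩ huv
    obtain ⟨hus, rfl⟩ := mem_filter.mp hu
    obtain ⟨hvs, hvu⟩ := mem_filter.mp hv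
    have hadj := colorGraph_lexColoring_adj.mp (hs hus hvs (ne_of_apply_ne _ huv))
    exact (hadj.resolve_left fun h => h.ne hvu.symm).2
  have hle : n i ≤ (k i - 1) * (l i - 1) := calc
    n i = #s := hcard.symm
    _ ≤ (l i - 1) * #(s.image Prod.fst) := card_le_mul_card_image s _ fun a _ => hfiber a
    _ ≤ (l i - 1) * (k i - 1) := by gcongr
    _ = (k i - 1) * (l i - 1) := mul_comm _ _
  exact (hn i).not_ge hle

theorem exists_avoidsCliques_pi (ι β : Type*) [Nonempty ι] [Fintype β] :
    ∃ c : Sym2 (ι → β) → ι, AvoidsCliques c fun _ => Fintype.card β + 1 := by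
  have hcoord (e : Sym2 (ι → β)) : ∃ i, ¬ e.IsDiag → ¬ (e.map (· i)).IsDiag := by
    induction e with | _ u v
    by_cases huv : u = v
    · exact ⟨Classical.arbitrary ι, fun h => (h huv).elim⟩
    · obtain ⟨i, hi⟩ := Function.ne_iff.mp huv
      exact ⟨i, fun _ => hi⟩
  choose c hc using hcoord
  refine ⟨c, fun i => ?_⟩
  have hsep {u v : ι → β} (huv : (colorGraph c i).Adj u v) : u i ≠ v i := by
    obtain ⟨rfl, hne⟩ := colorGraph_adj.mp huv
    simpa using hc s(u, v) (by simpa using hne)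
  exact (SimpleGraph.Coloring.mk (· i) hsep).colorable.cliqueFree (Nat.lt_succ_self _)

end Coloring

section Ramsey

open Finset

theorem cliqueFreeOn_inter_neighborSet {V K : Type*} [DecidableEq K] {c : Sym2 V → K} {k : K → ℕ}
    {s : Set V} (hs : ∀ j, (colorGraph c j).CliqueFreeOn s (k j)) {x : V} (hx : x ∈ s) {i : K}
    (hi : k i ≠ 0) (j : K) :
    (colorGraph c j).CliqueFreeOn (s ∩ (colorGraph c i).neighborSet x)
      (Function.update k i (k i - 1) j) := by
  obtain rfl | hji := eq_or_ne j i
  · rw [Function.update_self]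
    have hfree := hs j
    rw [← Nat.sub_one_add_one hi] at hfree
    exact hfree.of_succ _ hx
  · rw [Function.update_of_ne hji]
    exact (hs j).subset _ Set.inter_subset_left

theorem exists_card_lt_of_cliqueFreeOn {K : Type*} [Finite K] (k : K → ℕ) :
    ∃ N : ℕ, ∀ {V : Type*} (c : Sym2 V → K) (s : Finset V),
      (∀ i, (colorGraph c i).CliqueFreeOn s (k i)) → #s < N := by
  classical
  have := Fintype.ofFinite K
  induction k using WellFoundedLT.induction with | _ k ih
  by_cases h0 : ∃ i, k i = 0
  · obtain ⟨i, hi⟩ := h0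
    exact ⟨0, fun c s hs => (hs i (empty_subset _) (by simp [hi])).elim⟩
  push Not at h0
  have hlt (i : K) : Function.update k i (k i - 1) < k :=
    update_lt_self_iff.mpr (Nat.sub_one_lt (h0 i))
  choose N hN using fun i => ih _ (hlt i)
  refine ⟨∑ i, N i + 2, fun {V} c s hs => ?_⟩
  obtain rfl | ⟨x, hx⟩ := s.eq_empty_or_nonempty
  · simp
  have hnbhd (i : K) : #{y ∈ s.erase x | c s(x, y) = i} < N i := by
    refine hN i c _ fun j => ?_
    refine (cliqueFreeOn_inter_neighborSet hs hx (h0 i) j).subset _ fun y hy => ?_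
    obtain ⟨⟨hyx, hys⟩, hyi⟩ : (y ≠ x ∧ y ∈ s) ∧ c s(x, y) = i := by simpa using hy
    exact ⟨hys, hyi, hyx.symm⟩
  have hsum : #(s.erase x) = ∑ i, #{y ∈ s.erase x | c s(x, y) = i} :=
    card_eq_sum_card_fiberwise fun _ _ => mem_coe.mpr (mem_univ _)
  have hle : #(s.erase x) ≤ ∑ i, N i := hsum.trans_le (sum_le_sum fun i _ => (hnbhd i).le)
  have hcard := card_erase_add_one hx
  omega

variable {r : ℕ} {k : Fin r → ℕ} {N : ℕ}

theorem ramseyProp_iff : ramseyProp k N ↔ ∀ c : Sym2 (Fin N) → Fin r, ¬ AvoidsCliques c k := by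
  have hiff (c : Sym2 (Fin N) → Fin r) (i : Fin r) (S : Finset (Fin N)) :
      (colorGraph c i).IsNClique (k i) S ↔
        #S = k i ∧ ∀ u ∈ S, ∀ v ∈ S, u ≠ v → c s(u, v) = i := by
    rw [SimpleGraph.isNClique_iff, and_comm]
    refine and_congr_right fun _ => forall₅_congr fun u _ v _ huv => ?_
    rw [colorGraph_adj, and_iff_left huv]
  simp only [ramseyProp, AvoidsCliques, SimpleGraph.CliqueFree, hiff, not_forall, not_not]

variable (k) in
theorem multiRamsey_mem : multiRamsey k ∈ {N | 0 < N ∧ ramseyProp k N} := by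
  obtain ⟨N, hN⟩ := exists_card_lt_of_cliqueFreeOn.{0, 0} k
  refine Nat.sInf_mem ⟨N + 1, N.succ_pos, ramseyProp_iff.mpr fun c hc => ?_⟩
  have hcard := hN c univ fun i => (hc i).cliqueFreeOn
  rw [card_univ, Fintype.card_fin] at hcard
  omega

theorem card_lt_multiRamsey {V : Type*} [Fintype V] {c : Sym2 V → Fin r}
    (hc : AvoidsCliques c k) : Fintype.card V < multiRamsey k := by
  by_contra! hle
  obtain ⟨f⟩ : Nonempty (Fin (multiRamsey k) ↪ V) :=
    Function.Embedding.nonempty_of_card_le (by rwa [Fintype.card_fin])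
  exact ramseyProp_iff.mp (multiRamsey_mem k).2 _ (hc.comp_map f)

theorem exists_avoidsCliques_of_lt_multiRamsey (hN : N ≠ 0) (hlt : N < multiRamsey k) :
    ∃ c : Sym2 (Fin N) → Fin r, AvoidsCliques c k := by
  by_contra! h
  exact Nat.notMem_of_lt_sInf hlt ⟨Nat.pos_of_ne_zero hN, ramseyProp_iff.mpr h⟩

theorem lt_multiRamsey_of_forall_lt [NeZero r] (h : ∀ i, N < k i) : N < multiRamsey k := by
  have hc : AvoidsCliques (fun _ : Sym2 (Fin N) => (0 : Fin r)) k := fun i =>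
    SimpleGraph.cliqueFree_of_card_lt (by simpa using h i)
  simpa using card_lt_multiRamsey hc

theorem sub_one_mul_sub_one_lt_multiRamsey {l n : Fin r → ℕ}
    (hn : ∀ i, (k i - 1) * (l i - 1) < n i) :
    (multiRamsey k - 1) * (multiRamsey l - 1) < multiRamsey n := by
  obtain hk | hk := eq_or_ne (multiRamsey k - 1) 0
  · simpa [hk] using (multiRamsey_mem n).1
  obtain hl | hl := eq_or_ne (multiRamsey l - 1) 0
  · simpa [hl] using (multiRamsey_mem n).1
  obtain ⟨χ, hχ⟩ := exists_avoidsCliques_of_lt_multiRamsey hk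
    (Nat.sub_one_lt (multiRamsey_mem k).1.ne')
  obtain ⟨ψ, hψ⟩ := exists_avoidsCliques_of_lt_multiRamsey hl
    (Nat.sub_one_lt (multiRamsey_mem l).1.ne')
  simpa using card_lt_multiRamsey (hχ.lexColoring hψ hn)

theorem pow_lt_diagRamsey_succ (r m : ℕ) [NeZero r] : m ^ r < diagRamsey r (m + 1) := by
  obtain ⟨c, hc⟩ := exists_avoidsCliques_pi (Fin r) (Fin m)
  simpa [diagRamsey] using card_lt_multiRamsey hc

theorem pow_mul_diagRamsey_sub_one_lt {m k n : ℕ} [NeZero r] (hn : m * (k - 1) < n) :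
    m ^ r * (diagRamsey r k - 1) < diagRamsey r n := calc
  m ^ r * (diagRamsey r k - 1) ≤ (diagRamsey r (m + 1) - 1) * (diagRamsey r k - 1) := by
    gcongr
    exact Nat.le_sub_one_of_lt (pow_lt_diagRamsey_succ r m)
  _ < diagRamsey r n := sub_one_mul_sub_one_lt_multiRamsey fun _ => hn

theorem pow_mul_diagRamsey_le {m k n : ℕ} [NeZero r] (hk : 2 ≤ k) (hn : m * (k - 1) < n) :
    m ^ r * diagRamsey r k ≤ 2 * diagRamsey r n := by
  have hone : 1 < diagRamsey r k := lt_multiRamsey_of_forall_lt fun _ => hk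
  calc
    m ^ r * diagRamsey r k ≤ m ^ r * (2 * (diagRamsey r k - 1)) := by gcongr; omega
    _ = 2 * (m ^ r * (diagRamsey r k - 1)) := by ring
    _ ≤ 2 * diagRamsey r n := by gcongr; exact (pow_mul_diagRamsey_sub_one_lt hn).le

end Ramsey

section Limit

theorem tendsto_const_rpow_one_div_nat {C : ℝ≥0∞} (h0 : C ≠ 0) (htop : C ≠ ∞) :
    Tendsto (fun r : ℕ => C ^ (1 / (r : ℝ))) atTop (𝓝 1) := by
  lift C to NNReal using htop
  rw [ENNReal.coe_ne_zero] at h0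
  have hreal : Tendsto (fun r : ℕ => C ^ (1 / (r : ℝ))) atTop (𝓝 (C ^ (0 : ℝ))) :=
    tendsto_const_nhds.nnrpow tendsto_one_div_atTop_nhds_zero_nat (Or.inl h0)
  simpa [← ENNReal.coe_rpow_of_ne_zero h0] using ENNReal.tendsto_coe.mpr hreal

theorem mul_le_of_tendsto_rpow_one_div {u v : ℕ → ℝ≥0∞} {a b m C : ℝ≥0∞} (hm : m ≠ ∞)
    (hC₀ : C ≠ 0) (hC : C ≠ ∞) (huv : ∀ᶠ r in atTop, m ^ r * u r ≤ C * v r)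
    (hu : Tendsto (fun r : ℕ => u r ^ (1 / (r : ℝ))) atTop (𝓝 a))
    (hv : Tendsto (fun r : ℕ => v r ^ (1 / (r : ℝ))) atTop (𝓝 b)) :
    m * a ≤ b := by
  have hroot : ∀ᶠ r : ℕ in atTop,
      m * u r ^ (1 / (r : ℝ)) ≤ C ^ (1 / (r : ℝ)) * v r ^ (1 / (r : ℝ)) := by
    filter_upwards [huv, eventually_ne_atTop 0] with r hr hr0
    have hexp : (0 : ℝ) ≤ 1 / (r : ℝ) := by positivity
    have hpow : (m ^ r) ^ (1 / (r : ℝ)) = m := by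
      rw [one_div, ENNReal.pow_rpow_inv_natCast hr0]
    calc m * u r ^ (1 / (r : ℝ)) = (m ^ r * u r) ^ (1 / (r : ℝ)) := by
          rw [ENNReal.mul_rpow_of_nonneg _ _ hexp, hpow]
      _ ≤ (C * v r) ^ (1 / (r : ℝ)) := ENNReal.rpow_le_rpow hr hexp
      _ = C ^ (1 / (r : ℝ)) * v r ^ (1 / (r : ℝ)) := ENNReal.mul_rpow_of_nonneg _ _ hexp
  have hleft := ENNReal.Tendsto.const_mul hu (Or.inr hm)
  have hright := ENNReal.Tendsto.mul (tendsto_const_rpow_one_div_nat hC₀ hC)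
    (Or.inl one_ne_zero) hv (Or.inr ENNReal.one_ne_top)
  simpa only [one_mul] using le_of_tendsto_of_tendsto hleft hright hroot

end Limit

theorem stmt11_general {m k n : ℕ} (hk : 2 ≤ k) (hn : m * (k - 1) < n) {a b : ℝ≥0∞}
    (ha : Tendsto (fun r : ℕ => (diagRamsey r k : ℝ≥0∞) ^ (1 / (r : ℝ))) atTop (𝓝 a))
    (hb : Tendsto (fun r : ℕ => (diagRamsey r n : ℝ≥0∞) ^ (1 / (r : ℝ))) atTop (𝓝 b)) :
    m * a ≤ b := by
  refine mul_le_of_tendsto_rpow_one_div (ENNReal.natCast_ne_top m) two_ne_zero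
    ENNReal.ofNat_ne_top ?_ ha hb
  filter_upwards [eventually_ne_atTop 0] with r hr
  have : NeZero r := ⟨hr⟩
  exact_mod_cast pow_mul_diagRamsey_le (r := r) hk hn

/-- `L_{2k} ≥ 2 · L_k` in `[0, ∞]` for every `k ≥ 3`,
where `L j` is the limit of `r ↦ R_r(j)^{1/r}` in `[0, ∞]`. -/
theorem stmt11 (L : ℕ → ℝ≥0∞)
    (hL : ∀ j, 2 ≤ j →
      Tendsto (fun r : ℕ => ((diagRamsey r j : ℝ≥0∞)) ^ (1 / (r : ℝ))) atTop (𝓝 (L j)))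
    (k : ℕ) (hk : 3 ≤ k) :
    2 * L k ≤ L (2 * k) := by
  exact_mod_cast stmt11_general (m := 2) (by omega) (by omega) (hL k (by omega))
    (hL (2 * k) (by omega))
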